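/- Let Q be a finite connected quiver with vertex set {1, …, n}, without loops, with at most one arrow between any two vertices (in either direction), and in which every chordless cycle is oriented. Assume that Q admits a positive definite quasi-Cartan companion. Let Δ be an admissible cut of Q, and define the symmetric integer n×n matrix B by: B_ii = 2 for all i; for i ≠ j joined by an arrow of Q, B_ij = B_ji = 1 if that arrow belongs to Δ and B_ij = B_ji = −1 otherwise; and B_ij = 0 if there is no arrow between i and j. Then B is positive definite. -/

import Mathlib

/-- The set of arrows of the full subquiver of the quiver with arrows `A`,
source map `s` and target map `t`, on the vertex set `S`. -/
def fullArrows {V A : Type*} [Fintype A] [DecidableEq V] (s t : A → V) (S : Finset V) :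
    Finset A :=
  Finset.univ.filter fun a => s a ∈ S ∧ t a ∈ S

/-- Two vertices are joined by an arrow (in either direction) of the full subquiver on `S`. -/
def adjOn {V A : Type*} [Fintype A] [DecidableEq V] (s t : A → V) (S : Finset V)
    (u v : V) : Prop :=
  ∃ a ∈ fullArrows s t S, (s a = u ∧ t a = v) ∨ (s a = v ∧ t a = u)

/-- The vertex set `S` carries a chordless cycle: the full subquiver on `S` is nonempty,
connected, and exactly two of its arrows are incident (as source or target) to each of
its vertices. -/
def IsChordlessCycle {V A : Type*} [Fintype A] [DecidableEq V] (s t : A → V)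
    (S : Finset V) : Prop :=
  S.Nonempty ∧
  (∀ u ∈ S, ∀ v ∈ S, Relation.ReflTransGen (adjOn s t S) u v) ∧
  ∀ v ∈ S, ((fullArrows s t S).filter fun a => s a = v ∨ t a = v).card = 2

/-- The chordless cycle on `S` is oriented: at each vertex exactly one incident arrow
starts there and exactly one ends there. -/
def IsOrientedChordlessCycle {V A : Type*} [Fintype A] [DecidableEq V] (s t : A → V)
    (S : Finset V) : Prop :=
  IsChordlessCycle s t S ∧
  ∀ v ∈ S, ((fullArrows s t S).filter fun a => s a = v).card = 1 ∧
    ((fullArrows s t S).filter fun a => t a = v).card = 1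

/-- An admissible cut: a set of arrows containing exactly one arrow of each oriented
chordless cycle of the quiver. -/
def IsAdmissibleCut {V A : Type*} [Fintype A] [DecidableEq V] [DecidableEq A]
    (s t : A → V) (Δ : Finset A) : Prop :=
  ∀ S : Finset V, IsOrientedChordlessCycle s t S →
    ((fullArrows s t S).filter fun a => a ∈ Δ).card = 1

/-- `IsPathFrom s t x y l` : the list of arrows `l` is a path from `x` to `y` in the
quiver with source map `s` and target map `t`. -/
inductive IsPathFrom {V A : Type*} (s t : A → V) : V → V → List A → Prop
  | nil (v : V) : IsPathFrom s t v v []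
  | cons {u w : V} {a : A} {l : List A} (h1 : s a = u) (h2 : IsPathFrom s t (t a) w l) :
      IsPathFrom s t u w (a :: l)

/-- A quasi-Cartan companion of a quiver (with no loops and at most one arrow between
any two vertices): a symmetric integer matrix with `2` on the diagonal, entries of
absolute value `1` at pairs of vertices joined by an arrow, and `0` elsewhere. -/
def IsQuasiCartanCompanion {V A : Type*} (s t : A → V) (M : Matrix V V ℤ) : Prop :=
  (∀ i j, M i j = M j i) ∧ (∀ i, M i i = 2) ∧
  ∀ i j, i ≠ j →
    ((∃ a : A, (s a = i ∧ t a = j) ∨ (s a = j ∧ t a = i)) →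
      (M i j = 1 ∨ M i j = -1)) ∧
    ((¬ ∃ a : A, (s a = i ∧ t a = j) ∨ (s a = j ∧ t a = i)) → M i j = 0)

/-- A symmetric integer matrix is positive definite:
`xᵀ M x > 0` for every nonzero (integer) vector `x`. -/
def PosDefInt {V : Type*} [Fintype V] (M : Matrix V V ℤ) : Prop :=
  ∀ x : V → ℤ, x ≠ 0 → 0 < ∑ i, ∑ j, M i j * x i * x j

/-!
Regard the sign pattern of a companion `M` as a signed graph, an edge `ij` carrying the sign
`-M i j`. Two companions of the same graph are conjugate by a diagonal sign matrix, hence are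
positive definite together, as soon as the product of their signings is balanced, i.e. of the form
`d i * d j`.

A minimal vertex set on which a signing is not balanced is an induced cycle, because a shortest
unbalanced closed walk has no chord: a chord would split it into two shorter closed walks, the
signs of which multiply to `-1`. Moreover, changing the sign of any single edge of such a cycle
makes it balanced.

Suppose that the product of the signings of `B` and `M` is not balanced and let `S` be a minimal
such set. Exactly one edge of the cycle `S` is negative for `B`, so changing its sign in the product
gives the signing of `M`, which is therefore balanced on `S`, say equal to `d i * d j`. But then
`∑ i ∈ S, d i • e i` is isotropic for `M`, contradicting positivity.
-/

section SignedGraph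

variable {V : Type*} {G : SimpleGraph V} {σ : Sym2 V → ℤˣ} {u v w : V}

/-! ### Signs of walks -/

/-- The sign of a walk in the signed graph `(G, σ)`. -/
def walkSign (σ : Sym2 V → ℤˣ) (p : G.Walk u v) : ℤˣ :=
  (p.edges.map σ).prod

lemma walkSign_nil : walkSign σ (.nil : G.Walk u u) = 1 := by
  simp [walkSign]

lemma walkSign_cons (h : G.Adj u v) (p : G.Walk v w) :
    walkSign σ (p.cons h) = σ s(u, v) * walkSign σ p := by
  simp [walkSign]

lemma walkSign_append (p : G.Walk u v) (q : G.Walk v w) :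
    walkSign σ (p.append q) = walkSign σ p * walkSign σ q := by
  simp [walkSign]

lemma walkSign_reverse (p : G.Walk u v) : walkSign σ p.reverse = walkSign σ p := by
  simp [walkSign, List.prod_reverse]

lemma walkSign_rotate [DecidableEq V] (p : G.Walk u u) (h : v ∈ p.support) :
    walkSign σ (p.rotate v h) = walkSign σ p :=
  ((p.rotate_edges v h).perm.map σ).prod_eq

/-- The signed graph `(G, σ)` is balanced on `S`: switching signs at vertices makes all edges
inside `S` positive. -/
def BalancedOn (G : SimpleGraph V) (σ : Sym2 V → ℤˣ) (S : Set V) : Prop :=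
  ∃ d : V → ℤˣ, ∀ i ∈ S, ∀ j ∈ S, G.Adj i j → σ s(i, j) = d i * d j

lemma BalancedOn.walkSign_eq_one {S : Set V} (h : BalancedOn G σ S) (p : G.Walk u u)
    (hp : ∀ x ∈ p.support, x ∈ S) : walkSign σ p = 1 := by
  obtain ⟨d, hd⟩ := h
  suffices ∀ {u v : V} (p : G.Walk u v), (∀ x ∈ p.support, x ∈ S) →
      walkSign σ p = d u * d v by
    rw [this p hp, Int.units_mul_self]
  intro u v p hp
  induction p with
  | nil => rw [walkSign_nil, Int.units_mul_self]
  | @cons u x v hux p ih =>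
    simp only [SimpleGraph.Walk.support_cons, List.forall_mem_cons] at hp
    rw [walkSign_cons, ih hp.2, hd u hp.1 x (hp.2 x p.start_mem_support) hux, mul_assoc,
      ← mul_assoc (d x), Int.units_mul_self, one_mul]

-- The signs `d` are the signs of walks from a root chosen in each component of `G.induce S`.
lemma balancedOn_of_walkSign_eq_one {S : Set V}
    (h : ∀ (u : V) (p : G.Walk u u), (∀ x ∈ p.support, x ∈ S) → walkSign σ p = 1) :
    BalancedOn G σ S := by
  classical
  let root (i : S) : S := ((G.induce S).connectedComponentMk i).out
  have reach (i : S) : (G.induce S).Reachable (root i) i :=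
    SimpleGraph.ConnectedComponent.exact (Quot.out_eq _)
  have exists_walk (i : S) : ∃ p : G.Walk (root i : V) i, ∀ x ∈ p.support, x ∈ S := by
    obtain ⟨p⟩ := reach i
    refine ⟨p.map (SimpleGraph.Embedding.induce S).toHom, fun x hx => ?_⟩
    obtain ⟨y, -, rfl⟩ := List.mem_map.1 ((SimpleGraph.Walk.support_map _ p) ▸ hx)
    exact y.2
  choose p hp using exists_walk
  refine ⟨fun i => if hi : i ∈ S then walkSign σ (p ⟨i, hi⟩) else 1, fun i hi j hj hij => ?_⟩
  have hroot : (root ⟨j, hj⟩ : V) = root ⟨i, hi⟩ := by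
    have : (G.induce S).Adj ⟨j, hj⟩ ⟨i, hi⟩ := hij.symm
    simp only [root, SimpleGraph.ConnectedComponent.sound this.reachable]
  let q : G.Walk (root ⟨i, hi⟩ : V) j := (p ⟨j, hj⟩).copy hroot rfl
  have hq : walkSign σ q = walkSign σ (p ⟨j, hj⟩) := by simp [q, walkSign]
  have hclosed := h _ ((p ⟨i, hi⟩).append (q.reverse.cons hij)) (by
    intro x hx
    simp only [SimpleGraph.Walk.mem_support_append_iff, SimpleGraph.Walk.support_cons,
      List.mem_cons, SimpleGraph.Walk.support_reverse, List.mem_reverse, q,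
      SimpleGraph.Walk.support_copy] at hx
    rcases hx with hx | rfl | hx
    exacts [hp _ x hx, hi, hp _ x hx])
  rw [walkSign_append, walkSign_cons, walkSign_reverse, hq, mul_left_comm] at hclosed
  simpa only [dif_pos hi, dif_pos hj, Int.units_inv_eq_self] using eq_inv_of_mul_eq_one_left hclosed

/-! ### Shortest unbalanced closed walks -/

/-- The closed walk `p` is unbalanced, while every shorter closed walk through vertices of `p` is
balanced. -/
structure IsShortestUnbalanced (σ : Sym2 V → ℤˣ) (p : G.Walk u u) : Prop where
  sign_ne_one : walkSign σ p ≠ 1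
  sign_eq_one_of_shorter : ∀ (v : V) (q : G.Walk v v), q.support ⊆ p.support →
    q.length < p.length → walkSign σ q = 1

lemma exists_isShortestUnbalanced {S : Set V} (hS : ¬ BalancedOn G σ S) :
    ∃ (u : V) (p : G.Walk u u), IsShortestUnbalanced σ p ∧ ∀ x ∈ p.support, x ∈ S := by
  obtain ⟨u, p, hpS, hp⟩ :
      ∃ (u : V) (p : G.Walk u u), (∀ x ∈ p.support, x ∈ S) ∧ walkSign σ p ≠ 1 := by
    contrapose! hS
    exact balancedOn_of_walkSign_eq_one hS
  obtain ⟨⟨u, p⟩, ⟨hpS, hp⟩, hmin⟩ := exists_minimalFor_of_wellFoundedLT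
    (fun c : Σ u, G.Walk u u => (∀ x ∈ c.2.support, x ∈ S) ∧ walkSign σ c.2 ≠ 1)
    (fun c => c.2.length) ⟨⟨u, p⟩, hpS, hp⟩
  refine ⟨u, p, ⟨hp, fun v q hq hlt => ?_⟩, hpS⟩
  by_contra hne
  exact hlt.not_ge (hmin (j := ⟨v, q⟩) ⟨fun x hx => hpS x (hq hx), hne⟩ hlt.le)

namespace IsShortestUnbalanced

variable {p : G.Walk u u}

lemma rotate [DecidableEq V] (hp : IsShortestUnbalanced σ p) (h : v ∈ p.support) :
    IsShortestUnbalanced σ (p.rotate v h) where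
  sign_ne_one := by
    rw [walkSign_rotate]
    exact hp.sign_ne_one
  sign_eq_one_of_shorter w q hq hlt :=
    hp.sign_eq_one_of_shorter w q (fun x hx => (p.mem_support_rotate_iff v h).1 (hq hx))
      (by simpa using hlt)

lemma not_nil (hp : IsShortestUnbalanced σ p) : ¬ p.Nil := fun h =>
  hp.sign_ne_one <| by rw [SimpleGraph.Walk.eq_nil_iff_nil.2 h, walkSign_nil]

-- Otherwise the chord `u v` cuts `p` into two shorter closed walks; as the chord is traversed
-- twice, their signs multiply to the sign of `p`.
lemma eq_snd_or_eq_penultimate (hp : IsShortestUnbalanced σ p) (hv : v ∈ p.support)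
    (huv : G.Adj u v) : v = p.snd ∨ v = p.penultimate := by
  classical
  obtain ⟨q, r, rfl⟩ := SimpleGraph.Walk.mem_support_iff_exists_append.1 hv
  by_contra! hne
  have hq : 2 ≤ q.length := by
    by_contra! hlt
    cases q with
    | nil => exact huv.ne rfl
    | cons h q =>
      obtain rfl := SimpleGraph.Walk.eq_of_length_eq_zero (p := q) (by simpa using hlt)
      simp at hne
  have hr : 2 ≤ r.length := by
    by_contra! hlt
    cases r with
    | nil => exact huv.ne rfl
    | cons h r =>
      cases r with
      | nil => simp [← SimpleGraph.Walk.concat_eq_append] at hne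
      | cons => simp at hlt
  have hq_sign : walkSign σ (q.cons huv.symm) = 1 :=
    hp.sign_eq_one_of_shorter v _ (by simp) (by simp; lia)
  have hr_sign : walkSign σ (r.cons huv) = 1 :=
    hp.sign_eq_one_of_shorter u _ (by simp) (by simp; lia)
  apply hp.sign_ne_one
  rw [walkSign_cons] at hq_sign hr_sign
  calc walkSign σ (q.append r)
    _ = σ s(v, u) * walkSign σ q * (σ s(u, v) * walkSign σ r) := by
      rw [walkSign_append, Sym2.eq_swap, mul_mul_mul_comm, Int.units_mul_self, one_mul]
    _ = 1 := by rw [hq_sign, hr_sign, one_mul]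

-- Otherwise the walk goes back and forth along the edge `u p.snd`, and the part in between is a
-- shorter closed walk of the same sign.
lemma snd_ne_penultimate (hp : IsShortestUnbalanced σ p) : p.snd ≠ p.penultimate := by
  intro heq
  cases p with
  | nil => exact hp.not_nil .nil
  | @cons _ y _ h q =>
    have hq : ¬ q.Nil := SimpleGraph.Walk.not_nil_of_ne h.ne'
    obtain ⟨z, r, h', rfl⟩ : ∃ z, ∃ r : G.Walk y z, ∃ h' : G.Adj z u, q = r.concat h' :=
      ⟨_, q.dropLast, q.adj_penultimate hq, by simp⟩
    obtain rfl : y = z := by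
      rwa [← SimpleGraph.Walk.concat_cons, SimpleGraph.Walk.penultimate_concat,
        SimpleGraph.Walk.concat_cons, SimpleGraph.Walk.snd_cons] at heq
    have hr : walkSign σ r = 1 := hp.sign_eq_one_of_shorter y r (by simp) (by simp)
    apply hp.sign_ne_one
    rw [walkSign_cons, SimpleGraph.Walk.concat_eq_append, walkSign_append, walkSign_cons, hr,
      walkSign_nil, mul_one, one_mul, Sym2.eq_swap, Int.units_mul_self]

lemma exists_two_neighbors (hp : IsShortestUnbalanced σ p) (hv : v ∈ p.support) :
    ∃ a b, a ≠ b ∧ ∀ y, y ∈ p.support ∧ G.Adj v y ↔ y = a ∨ y = b := by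
  classical
  have hq := hp.rotate hv
  refine ⟨(p.rotate v hv).snd, (p.rotate v hv).penultimate, hq.snd_ne_penultimate, fun y => ?_⟩
  rw [← p.mem_support_rotate_iff v hv]
  constructor
  · rintro ⟨hy, hvy⟩
    exact hq.eq_snd_or_eq_penultimate hy hvy
  · rintro (rfl | rfl)
    · exact ⟨SimpleGraph.Walk.getVert_mem_support _ _, SimpleGraph.Walk.adj_snd hq.not_nil⟩
    · exact ⟨SimpleGraph.Walk.getVert_mem_support _ _,
        (SimpleGraph.Walk.adj_penultimate hq.not_nil).symm⟩

end IsShortestUnbalanced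

/-! ### Minimal unbalanced sets are induced cycles -/

open scoped Classical in
/-- The vertex set `S` induces a cycle in `G`, encoded as a connected `2`-regular graph. -/
structure IsInducedCycle (G : SimpleGraph V) (S : Finset V) : Prop where
  connected : (G.induce (S : Set V)).Connected
  card_neighbors : ∀ v ∈ S, {w ∈ S | G.Adj v w}.card = 2

theorem isInducedCycle_of_minimal_not_balancedOn {S : Finset V}
    (hS : Minimal (fun T : Finset V => ¬ BalancedOn G σ T) S) : IsInducedCycle G S := by
  classical
  obtain ⟨u, p, hp, hpS⟩ := exists_isShortestUnbalanced hS.prop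
  have hp_unbalanced : ¬ BalancedOn G σ (p.support.toFinset : Set V) := fun h =>
    hp.sign_ne_one (h.walkSign_eq_one p (by simp))
  obtain rfl : S = p.support.toFinset :=
    (hS.eq_of_le hp_unbalanced fun x hx => hpS x (by simpa using hx)).symm
  refine ⟨by rw [List.coe_toFinset]; exact p.connected_induce_support, fun v hv => ?_⟩
  obtain ⟨a, b, hab, hnbr⟩ := hp.exists_two_neighbors (by simpa using hv)
  rw [Finset.card_eq_two]
  exact ⟨a, b, hab, by ext y; simpa using hnbr y⟩

lemma BalancedOn.update_neg [DecidableEq V] {S : Set V} {e : Sym2 V}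
    (h : BalancedOn (G.deleteEdges {e}) σ S) (hS : ¬ BalancedOn G σ S) :
    BalancedOn G (Function.update σ e (-σ e)) S := by
  obtain ⟨d, hd⟩ := h
  have hfit : ∀ i ∈ S, ∀ j ∈ S, G.Adj i j → s(i, j) ≠ e → σ s(i, j) = d i * d j :=
    fun i hi j hj hij hne => hd i hi j hj (SimpleGraph.deleteEdges_adj.2 ⟨hij, hne⟩)
  have he : ∀ i j, s(i, j) = e → -σ e = d i * d j := by
    rintro p q rfl
    rw [neg_eq_iff_eq_neg, ← Int.units_ne_iff_eq_neg]
    intro hpq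
    refine hS ⟨d, fun i hi j hj hij => ?_⟩
    by_cases hne : s(i, j) = s(p, q)
    · rcases Sym2.eq_iff.1 hne with ⟨rfl, rfl⟩ | ⟨rfl, rfl⟩
      exacts [hpq, by rw [hne, hpq, mul_comm]]
    · exact hfit i hi j hj hij hne
  refine ⟨d, fun i hi j hj hij => ?_⟩
  by_cases hne : s(i, j) = e
  · rw [hne, Function.update_self, he i j hne]
  · rw [Function.update_of_ne hne, hfit i hi j hj hij hne]

-- Signs balancing `S.erase p` extend to `p` so as to fit the only edge at `p` left in `S`.
lemma balancedOn_deleteEdges_of_minimal_not_balancedOn {S : Finset V}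
    (hS : Minimal (fun T : Finset V => ¬ BalancedOn G σ T) S) {e : Sym2 V} (he : e ∈ G.edgeSet)
    (heS : ∀ v ∈ e, v ∈ S) : BalancedOn (G.deleteEdges {e}) σ S := by
  classical
  induction e with | _ p q => ?_
  have hpq : G.Adj p q := he
  have hpS : p ∈ S := heS p (Sym2.mem_mk_left p q)
  have hqS : q ∈ S := heS q (Sym2.mem_mk_right p q)
  obtain ⟨d, hd⟩ : BalancedOn G σ (S.erase p : Finset V) :=
    not_not.1 (hS.not_prop_of_lt (Finset.erase_ssubset hpS))
  obtain ⟨r, hr⟩ : ∃ r, {j ∈ S | G.Adj p j}.erase q = {r} := by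
    rw [← Finset.card_eq_one, Finset.card_erase_of_mem (by simp [hqS, hpq]),
      (isInducedCycle_of_minimal_not_balancedOn hS).card_neighbors p hpS]
  let d' := Function.update d p (σ s(p, r) * d r)
  have hp_fit : ∀ j ∈ S, G.Adj p j → s(p, j) ≠ s(p, q) → σ s(p, j) = d' p * d' j := by
    intro j hj hpj hne
    have hjq : j ≠ q := fun h => hne (h ▸ rfl)
    obtain rfl : j = r := Finset.mem_singleton.1 <| hr ▸ by simp [hj, hpj, hjq]
    simp only [d', Function.update_self, Function.update_of_ne hpj.ne', mul_assoc,
      Int.units_mul_self, mul_one]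
  refine ⟨d', fun i hi j hj hadj => ?_⟩
  obtain ⟨hij, hne⟩ : G.Adj i j ∧ s(i, j) ≠ s(p, q) := SimpleGraph.deleteEdges_adj.1 hadj
  by_cases hip : i = p
  · subst hip
    exact hp_fit j hj hij hne
  by_cases hjp : j = p
  · subst hjp
    rw [Sym2.eq_swap] at hne ⊢
    rw [mul_comm]
    exact hp_fit i hi hij.symm hne
  simp only [d', Function.update_of_ne hip, Function.update_of_ne hjp]
  exact hd i (by simp_all) j (by simp_all) hij

/-! ### Companions -/

/-- `M` is the quasi-Cartan companion of `G` in which the edge `ij` has the entry `-σ s(i, j)`; the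
entries `-1` thus correspond to the positive edges of the signed graph `(G, σ)`. -/
structure IsCompanion (G : SimpleGraph V) (σ : Sym2 V → ℤˣ) (M : Matrix V V ℤ) : Prop where
  diag : ∀ i, M i i = 2
  adj : ∀ i j, G.Adj i j → M i j = -σ s(i, j)
  nonadj : ∀ i j, i ≠ j → ¬ G.Adj i j → M i j = 0

variable {B M : Matrix V V ℤ} {β μ : Sym2 V → ℤˣ}

-- On an induced cycle balanced by `d`, each row of `M` is orthogonal to `d`: the diagonal
-- contributes `2` and the two neighbors `-1` each.
lemma not_balancedOn_of_posDefInt [Fintype V] (hM : IsCompanion G μ M) (hpos : PosDefInt M)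
    {S : Finset V} (hS : IsInducedCycle G S) : ¬ BalancedOn G μ S := by
  classical
  rintro ⟨d, hd⟩
  obtain ⟨v, hv⟩ := hS.connected.nonempty
  let x : V → ℤ := fun i => if i ∈ S then d i else 0
  have hx : x ≠ 0 := fun h => by simpa [x, Finset.mem_coe.1 hv] using congrFun h v
  have hterm : ∀ i ∈ S, ∀ j ∈ S,
      M i j * d i * d j = (if i = j then 2 else 0) - if G.Adj i j then 1 else 0 := by
    intro i hi j hj
    by_cases hij : i = j
    · subst hij
      simp [hM.diag, mul_assoc]
    by_cases hadj : G.Adj i j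
    · rw [hM.adj i j hadj, hd i hi j hj hadj]
      simp [hij, hadj, mul_comm, mul_left_comm]
    · simp [hM.nonadj i j hij hadj, hij, hadj]
  have hrow : ∀ i ∈ S, ∑ j ∈ S, M i j * d i * d j = 0 := by
    intro i hi
    rw [Finset.sum_congr rfl (hterm i hi), Finset.sum_sub_distrib, Finset.sum_ite_eq, if_pos hi,
      Finset.sum_boole, hS.card_neighbors i hi]
    norm_num
  refine (hpos x hx).ne' ?_
  calc ∑ i, ∑ j, M i j * x i * x j
    _ = ∑ i ∈ S, ∑ j ∈ S, M i j * d i * d j := by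
      simp [x]
    _ = 0 := Finset.sum_eq_zero hrow

lemma PosDefInt.of_balancedOn_mul [Fintype V] (hM : IsCompanion G μ M) (hB : IsCompanion G β B)
    (hpos : PosDefInt M) (hbal : BalancedOn G (β * μ) Set.univ) : PosDefInt B := by
  obtain ⟨d, hd⟩ := hbal
  have hconj : ∀ i j, B i j = M i j * d i * d j := by
    intro i j
    by_cases hij : i = j
    · subst hij
      rw [hB.diag, hM.diag, mul_assoc, Int.units_coe_mul_self, mul_one]
    by_cases hadj : G.Adj i j
    · have hβμ : β s(i, j) = d i * d j * μ s(i, j) := by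
        rw [← hd i trivial j trivial hadj, Pi.mul_apply, mul_assoc, Int.units_mul_self, mul_one]
      rw [hB.adj i j hadj, hM.adj i j hadj, hβμ]
      push_cast
      ring
    · simp [hB.nonadj i j hij hadj, hM.nonadj i j hij hadj]
  intro x hx
  have hdx : (fun i => d i * x i) ≠ 0 := by
    contrapose! hx
    ext i
    simpa using congrFun hx i
  calc 0 < ∑ i, ∑ j, M i j * (d i * x i) * (d j * x j) := hpos _ hdx
    _ = ∑ i, ∑ j, B i j * x i * x j :=
      Finset.sum_congr rfl fun i _ => Finset.sum_congr rfl fun j _ => by rw [hconj]; ring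

theorem posDefInt_of_existsUnique_neg_edge [Fintype V] (hM : IsCompanion G μ M)
    (hB : IsCompanion G β B) (hpos : PosDefInt M)
    (hβ : ∀ S : Finset V, IsInducedCycle G S →
      ∃! e, e ∈ G.edgeSet ∧ (∀ v ∈ e, v ∈ S) ∧ β e = -1) :
    PosDefInt B := by
  classical
  refine PosDefInt.of_balancedOn_mul hM hB hpos ?_
  by_contra hunbal
  obtain ⟨S, hS⟩ := exists_minimal_of_wellFoundedLT
    (fun T : Finset V => ¬ BalancedOn G (β * μ) T) ⟨Finset.univ, by simpa using hunbal⟩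
  have hcycle := isInducedCycle_of_minimal_not_balancedOn hS
  obtain ⟨e, ⟨he, heS, hβe⟩, huniq⟩ := hβ S hcycle
  obtain ⟨d, hd⟩ :=
    (balancedOn_deleteEdges_of_minimal_not_balancedOn hS he heS).update_neg hS.prop
  refine not_balancedOn_of_posDefInt hM hpos hcycle ⟨d, fun i hi j hj hij => ?_⟩
  rw [← hd i hi j hj hij]
  by_cases hne : s(i, j) = e
  · rw [hne, Function.update_self, Pi.mul_apply, hβe, neg_one_mul, neg_neg]
  · have hβ_pos : β s(i, j) = 1 := by
      rw [← neg_neg 1, ← Int.units_ne_iff_eq_neg]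
      exact fun h => hne (huniq _ ⟨hij, by simp_all, h⟩)
    rw [Function.update_of_ne hne, Pi.mul_apply, hβ_pos, one_mul]

end SignedGraph

section Quiver

variable {V A : Type*} {s t : A → V}

/-! ### Quivers -/

/-- The edge underlying an arrow of the quiver with source map `s` and target map `t`. -/
abbrev arrowEdge (s t : A → V) (a : A) : Sym2 V :=
  s(s a, t a)

/-- The graph underlying the quiver with source map `s` and target map `t`, loops being dropped. -/
def quiverGraph (s t : A → V) : SimpleGraph V :=
  .fromEdgeSet (Set.range (arrowEdge s t))

lemma quiverGraph_adj {i j : V} : (quiverGraph s t).Adj i j ↔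
    (∃ a, (s a = i ∧ t a = j) ∨ (s a = j ∧ t a = i)) ∧ i ≠ j := by
  simp [quiverGraph]

lemma arrowEdge_mem_edgeSet {a : A} (ha : s a ≠ t a) :
    arrowEdge s t a ∈ (quiverGraph s t).edgeSet :=
  quiverGraph_adj.2 ⟨⟨a, .inl ⟨rfl, rfl⟩⟩, ha⟩

lemma exists_arrowEdge_eq_of_mem_edgeSet {e : Sym2 V} (he : e ∈ (quiverGraph s t).edgeSet) :
    ∃ a, arrowEdge s t a = e := by
  rw [quiverGraph, SimpleGraph.edgeSet_fromEdgeSet] at he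
  exact he.1

section Fintype

variable [Fintype A] [DecidableEq V] {S : Finset V}

lemma mem_fullArrows {a : A} : a ∈ fullArrows s t S ↔ ∀ v ∈ arrowEdge s t a, v ∈ S := by
  simp [fullArrows]

lemma card_incident_fullArrows [DecidableRel (quiverGraph s t).Adj] (hnoloop : ∀ a, s a ≠ t a)
    (hinj : Function.Injective (arrowEdge s t)) {v : V} (hv : v ∈ S) :
    ((fullArrows s t S).filter fun a => s a = v ∨ t a = v).card =
      {w ∈ S | (quiverGraph s t).Adj v w}.card := by
  have himage : ((fullArrows s t S).filter fun a => s a = v ∨ t a = v).image (arrowEdge s t) =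
      {w ∈ S | (quiverGraph s t).Adj v w}.image (s(v, ·)) := by
    ext e
    simp only [Finset.mem_image, Finset.mem_filter]
    constructor
    · rintro ⟨a, ⟨ha, hav⟩, rfl⟩
      obtain ⟨w, hw⟩ : v ∈ arrowEdge s t a := by simpa [eq_comm] using hav
      have hadj := arrowEdge_mem_edgeSet (hnoloop a)
      rw [mem_fullArrows, hw] at ha
      rw [hw] at hadj ⊢
      exact ⟨w, ⟨ha w (Sym2.mem_mk_right v w), hadj⟩, rfl⟩
    · rintro ⟨w, ⟨hw, hvw⟩, rfl⟩
      obtain ⟨a, ha⟩ := exists_arrowEdge_eq_of_mem_edgeSet (e := s(v, w)) hvw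
      refine ⟨a, ⟨?_, ?_⟩, ha⟩
      · rw [mem_fullArrows, ha]
        simp [hv, hw]
      · have : v ∈ arrowEdge s t a := ha ▸ Sym2.mem_mk_left v w
        simpa [eq_comm] using this
  rw [← Finset.card_image_of_injective _ hinj, himage,
    Finset.card_image_of_injective _ fun _ _ => Sym2.congr_right.1]

lemma IsInducedCycle.isChordlessCycle (hS : IsInducedCycle (quiverGraph s t) S)
    (hnoloop : ∀ a, s a ≠ t a) (hinj : Function.Injective (arrowEdge s t)) :
    IsChordlessCycle s t S := by
  classical
  refine ⟨Finset.nonempty_coe_sort.1 hS.connected.nonempty, fun u hu v hv => ?_, fun v hv => ?_⟩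
  · have huv := hS.connected.preconnected ⟨u, hu⟩ ⟨v, hv⟩
    rw [SimpleGraph.reachable_iff_reflTransGen] at huv
    refine huv.lift Subtype.val fun i j hij => ?_
    obtain ⟨⟨a, ha⟩, -⟩ := quiverGraph_adj.1 hij
    refine ⟨a, ?_, ha⟩
    rw [mem_fullArrows, arrowEdge, Sym2.eq_iff.2 ha]
    simp
  · rw [card_incident_fullArrows hnoloop hinj hv, ← hS.card_neighbors v hv]

end Fintype

lemma IsQuasiCartanCompanion.exists_isCompanion {M : Matrix V V ℤ}
    (hM : IsQuasiCartanCompanion s t M) : ∃ μ, IsCompanion (quiverGraph s t) μ M := by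
  obtain ⟨hsymm, hdiag, hoff⟩ := hM
  refine ⟨Sym2.lift ⟨fun i j => if M i j = 1 then -1 else 1, fun i j => by simp only [hsymm i j]⟩,
    hdiag, fun i j hij => ?_, fun i j hne hij => ?_⟩
  · obtain ⟨ha, hne⟩ := quiverGraph_adj.1 hij
    rcases (hoff i j hne).1 ha with h | h <;> simp [h]
  · exact (hoff i j hne).2 fun ha => hij (quiverGraph_adj.2 ⟨ha, hne⟩)

open scoped Classical in
/-- The signing of the graph of a quiver in which the edges underlying the arrows of `Δ` are the
negative ones. -/
noncomputable def cutSign (s t : A → V) (Δ : Finset A) (e : Sym2 V) : ℤˣ :=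
  if ∃ a ∈ Δ, arrowEdge s t a = e then -1 else 1

lemma cutSign_eq_neg_one_iff {Δ : Finset A} {e : Sym2 V} :
    cutSign s t Δ e = -1 ↔ ∃ a ∈ Δ, arrowEdge s t a = e := by
  simp [cutSign]

lemma cutSign_arrowEdge [DecidableEq A] (hinj : Function.Injective (arrowEdge s t)) {Δ : Finset A}
    (a : A) : cutSign s t Δ (arrowEdge s t a) = if a ∈ Δ then -1 else 1 := by
  simp [cutSign, hinj.eq_iff]

lemma isCompanion_cutSign [DecidableEq A] (hinj : Function.Injective (arrowEdge s t))
    {Δ : Finset A} {B : Matrix V V ℤ} (hdiag : ∀ i, B i i = 2)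
    (harrow : ∀ i j, i ≠ j → ∀ a, ((s a = i ∧ t a = j) ∨ (s a = j ∧ t a = i)) →
      B i j = if a ∈ Δ then 1 else -1)
    (hzero : ∀ i j, i ≠ j → (¬ ∃ a, (s a = i ∧ t a = j) ∨ (s a = j ∧ t a = i)) → B i j = 0) :
    IsCompanion (quiverGraph s t) (cutSign s t Δ) B where
  diag := hdiag
  adj i j hij := by
    obtain ⟨⟨a, ha⟩, hne⟩ := quiverGraph_adj.1 hij
    rw [harrow i j hne a ha, ← Sym2.eq_iff.2 ha, cutSign_arrowEdge hinj]
    split_ifs <;> simp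
  nonadj i j hne hij := hzero i j hne fun ha => hij (quiverGraph_adj.2 ⟨ha, hne⟩)

lemma existsUnique_cutSign_eq_neg_one [Fintype A] [DecidableEq A] [DecidableEq V]
    (hnoloop : ∀ a, s a ≠ t a) {Δ : Finset A} {S : Finset V}
    (hΔ : ((fullArrows s t S).filter fun a => a ∈ Δ).card = 1) :
    ∃! e, e ∈ (quiverGraph s t).edgeSet ∧ (∀ v ∈ e, v ∈ S) ∧ cutSign s t Δ e = -1 := by
  obtain ⟨a, ha⟩ := Finset.card_eq_one.1 hΔ
  simp only [Finset.ext_iff, Finset.mem_filter, mem_fullArrows, Finset.mem_singleton] at ha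
  obtain ⟨haS, haΔ⟩ := (ha a).2 rfl
  refine ⟨arrowEdge s t a, ⟨arrowEdge_mem_edgeSet (hnoloop a), haS,
    cutSign_eq_neg_one_iff.2 ⟨a, haΔ, rfl⟩⟩, ?_⟩
  rintro e ⟨-, heS, he⟩
  obtain ⟨b, hbΔ, rfl⟩ := cutSign_eq_neg_one_iff.1 he
  rw [(ha b).1 ⟨heS, hbΔ⟩]

end Quiver

theorem stmt_6_general {V A : Type*} [Fintype V] [DecidableEq V] [Fintype A] [DecidableEq A]
    (s t : A → V)
    (hnoloop : ∀ a : A, s a ≠ t a)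
    (hsimple : ∀ a b : A,
      ((s a = s b ∧ t a = t b) ∨ (s a = t b ∧ t a = s b)) → a = b)
    (hQC : ∃ M : Matrix V V ℤ, IsQuasiCartanCompanion s t M ∧ PosDefInt M)
    (Δ : Finset A)
    (hΔ : ∀ S : Finset V, IsChordlessCycle s t S →
      ((fullArrows s t S).filter fun a => a ∈ Δ).card = 1)
    (B : Matrix V V ℤ)
    (hBdiag : ∀ i, B i i = 2)
    (hBarrow : ∀ i j : V, i ≠ j → ∀ a : A,
      ((s a = i ∧ t a = j) ∨ (s a = j ∧ t a = i)) →
      B i j = if a ∈ Δ then 1 else -1)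
    (hBzero : ∀ i j : V, i ≠ j →
      (¬ ∃ a : A, (s a = i ∧ t a = j) ∨ (s a = j ∧ t a = i)) → B i j = 0) :
    PosDefInt B := by
  have hinj : Function.Injective (arrowEdge s t) := fun a b hab =>
    hsimple a b (Sym2.eq_iff.1 hab)
  obtain ⟨M, hM, hpos⟩ := hQC
  obtain ⟨μ, hμ⟩ := hM.exists_isCompanion
  have hβ := isCompanion_cutSign hinj hBdiag hBarrow hBzero
  exact posDefInt_of_existsUnique_neg_edge hμ hβ hpos fun S hS =>
    existsUnique_cutSign_eq_neg_one hnoloop (hΔ S (hS.isChordlessCycle hnoloop hinj))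

/-- let `Q` be a finite connected quiver on the vertices `Fin n`, without
loops, with at most one arrow between any two vertices (in either direction), in which
every chordless cycle is oriented, and admitting a positive definite quasi-Cartan
companion. Let `Δ` be an admissible cut and let `B` be the symmetric matrix with `2` on
the diagonal, entry `1` at pairs of distinct vertices joined by an arrow of `Δ`, entry
`-1` at pairs joined by an arrow not in `Δ`, and `0` at pairs not joined by an arrow.
Then `B` is positive definite. -/
theorem stmt_6 {n : ℕ} {A : Type*} [Fintype A] [DecidableEq A]
    (s t : A → Fin n)
    (hnoloop : ∀ a : A, s a ≠ t a)
    (hsimple : ∀ a b : A,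
      ((s a = s b ∧ t a = t b) ∨ (s a = t b ∧ t a = s b)) → a = b)
    (hconn : ∀ u v : Fin n,
      Relation.ReflTransGen
        (fun x y => ∃ a : A, (s a = x ∧ t a = y) ∨ (s a = y ∧ t a = x)) u v)
    (horiented : ∀ S : Finset (Fin n),
      IsChordlessCycle s t S → IsOrientedChordlessCycle s t S)
    (hQC : ∃ M : Matrix (Fin n) (Fin n) ℤ, IsQuasiCartanCompanion s t M ∧ PosDefInt M)
    (Δ : Finset A) (hΔ : IsAdmissibleCut s t Δ)
    (B : Matrix (Fin n) (Fin n) ℤ)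
    (hBsym : ∀ i j, B i j = B j i)
    (hBdiag : ∀ i, B i i = 2)
    (hBarrow : ∀ (i j : Fin n), i ≠ j → ∀ a : A,
      ((s a = i ∧ t a = j) ∨ (s a = j ∧ t a = i)) →
      B i j = if a ∈ Δ then 1 else -1)
    (hBzero : ∀ (i j : Fin n), i ≠ j →
      (¬ ∃ a : A, (s a = i ∧ t a = j) ∨ (s a = j ∧ t a = i)) → B i j = 0) :
    PosDefInt B := by
  exact stmt_6_general s t hnoloop hsimple hQC Δ (fun S hS => hΔ S (horiented S hS)) B hBdiag
    hBarrow hBzero
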